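/- Let ℓ < n and let A_ℓ ≤ S_n be the alternating group on {1,…,ℓ}, embedded in S_n as the even permutations fixing each of ℓ+1,…,n. Then for every g ∈ S_n and every irreducible complex character χ of S(g) = A_ℓ ∩ g A_ℓ g⁻¹, the indicator ν₂(g,χ) equals 0 or 1. (Equivalently: all simple objects of C(S_n, A_ℓ) have Frobenius–Schur indicator 0 or 1.) -/

import Mathlib

open scoped BigOperators Pointwise Classical
open CategoryTheory

/-- For `H ≤ G` and `g ∈ G`, the stabilizer `S(g) = Stab_H(gH) = H ∩ gHg⁻¹`. -/
def stabCoset {G : Type*} [Group G] (H : Subgroup G) (g : G) : Subgroup G :=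
  H ⊓ Subgroup.map (MulAut.conj g).toMonoidHom H

/-- The `m`-th Frobenius–Schur indicator `ν_m(g,χ)` of the simple object of the
group-theoretical fusion category `C(G,H)` attached to `(g,χ)`:
`ν_m(g,χ) = (1/|S(g)|) Σ_{x ∈ H, (gx)^m ∈ H} conj(χ((gx)^m))`
(recall that for `x ∈ H`, `(gx)^m ∈ H` iff `(gx)^m ∈ S(g)`). -/
noncomputable def nuInd {G : Type*} [Group G] (H : Subgroup G) (g : G) (m : ℕ)
    (χ : ↥(stabCoset H g) → ℂ) : ℂ :=
  (Nat.card ↥(stabCoset H g) : ℂ)⁻¹ *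
    ∑ᶠ x : G, if h : x ∈ H ∧ (g * x) ^ m ∈ stabCoset H g
      then (starRingEnd ℂ) (χ ⟨(g * x) ^ m, h.2⟩) else 0

/-- The classical second Frobenius–Schur indicator `ν₂(θ) = (1/|K|) Σ_{x∈K} θ(x²)`. -/
noncomputable def fsInd {K : Type*} [Group K] (θ : K → ℂ) : ℂ :=
  (Nat.card K : ℂ)⁻¹ * ∑ᶠ x : K, θ (x ^ 2)

/-- The copy of `S_ℓ` inside `S_n`: permutations of `{1,…,n}` (0-indexed as `Fin n`)
fixing each of the points `ℓ+1,…,n` (0-indexed: the points with index `≥ ℓ`). -/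
def fixSubgroup (n ℓ : ℕ) : Subgroup (Equiv.Perm (Fin n)) where
  carrier := {σ | ∀ i : Fin n, ℓ ≤ (i : ℕ) → σ i = i}
  one_mem' := fun _ _ => rfl
  mul_mem' := by
    intro a b ha hb i hi
    simp only [Equiv.Perm.mul_apply, hb i hi, ha i hi]
  inv_mem' := by
    intro a ha i hi
    simp only [Set.mem_setOf_eq] at *
    exact (Equiv.symm_apply_eq a).mpr (ha i hi).symm

/-!
If `(g x) ^ 2 ∈ S(g)` for some `x ∈ H = A_ℓ` (otherwise `ν₂(g,χ) = 0`), put `p = g x`. Then `S(g)`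
is the alternating group of the set `T = L ∩ g L`, where `L` is the set of the first `ℓ` points,
`p` preserves `T`, and `ν₂(g,χ)` is the complex conjugate of the average of `χ (y ^ 2)` over the
coset `p A_T` of `A_T` in `S_T`. There are at most two cosets. The average over `A_T` itself is the
Frobenius–Schur indicator of `χ`, and the one over the other coset `s A_T`, with `s` a
transposition, is the indicator of `χ` twisted by conjugation by `s`: both lie in `{0, 1, -1}`.
Their sum is the indicator of the representation induced from `χ` to `S_T`, which is a positive
integer because all irreducible representations of a symmetric group have indicator `1`; so neither
average is `-1`.

The indicator of an irreducible representation of `S_T` is `1` or `-1` because its character is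
real; that it is not `-1` follows by induction on `T`. Every permutation is conjugate to its inverse
by a permutation fixing a given point `a`, so by Gelfand's trick the projection to a
subrepresentation `W` for `S_{T∖a}` is self-adjoint for an invariant bilinear form `ω`. Hence `ω`
vanishes if its restriction to `W` does, and for an irreducible `W` and a skew-symmetric `ω` that is
the induction hypothesis.
-/

section RepresentationBasics
open Representation
open scoped MonoidAlgebra

variable {k G H V : Type*} [Field k] [Group G] [Group H] [AddCommGroup V] [Module k V]

theorem isIrreducible_comp_of_surjective {ρ : Representation k G V} [ρ.IsIrreducible]
    {φ : H →* G} (hφ : Function.Surjective φ) : IsIrreducible (ρ.comp φ) := by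
  let e : Subrepresentation (ρ.comp φ) ≃o Subrepresentation ρ :=
    { toFun W := ⟨W.toSubmodule, fun g v hv ↦ by
        obtain ⟨h, rfl⟩ := hφ g
        exact W.apply_mem_toSubmodule h hv⟩
      invFun W := ⟨W.toSubmodule, fun h _ hv ↦ W.apply_mem_toSubmodule (φ h) hv⟩
      left_inv _ := rfl
      right_inv _ := rfl
      map_rel_iff' := Iff.rfl }
  exact e.isSimpleOrder

theorem nontrivial_of_isIrreducible (ρ : Representation k G V) [ρ.IsIrreducible] : Nontrivial V :=
  IsSimpleModule.nontrivial k[G] ρ.asModule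

/-- The subrepresentations of the representation on `W` are the subrepresentations of `ρ` below
`W`. -/
def subrepresentationOrderIsoIic {ρ : Representation k G V} (W : Subrepresentation ρ) :
    Subrepresentation W.toRepresentation ≃o Set.Iic W where
  toFun U := ⟨⟨U.toSubmodule.map W.toSubmodule.subtype, by
      rintro g _ ⟨w, hw, rfl⟩
      exact ⟨W.toRepresentation g w, U.apply_mem_toSubmodule g hw, rfl⟩⟩,
    Submodule.map_subtype_le W.toSubmodule U.toSubmodule⟩
  invFun U := ⟨U.1.toSubmodule.comap W.toSubmodule.subtype,
    fun g _ hw ↦ U.1.apply_mem_toSubmodule g hw⟩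
  left_inv U := Subrepresentation.toSubmodule_injective
    (Submodule.comap_map_eq_of_injective W.toSubmodule.injective_subtype _)
  right_inv U := Subtype.ext <| Subrepresentation.toSubmodule_injective <| by
    exact Submodule.map_comap_eq_self (U.2.trans_eq W.toSubmodule.range_subtype.symm)
  map_rel_iff' {U U'} := Submodule.map_le_map_iff_of_injective W.toSubmodule.injective_subtype
    U.toSubmodule U'.toSubmodule

theorem exists_isIrreducible_subrepresentation [Finite G] [NeZero (Nat.card G : k)] [Nontrivial V]
    (ρ : Representation k G V) :
    ∃ W : Subrepresentation ρ, W.toRepresentation.IsIrreducible := by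
  let e := Subrepresentation.subrepresentationSubmoduleOrderIso (ρ := ρ)
  have : IsAtomic (Subrepresentation ρ) := e.isAtomic_iff.mpr inferInstance
  have : Nontrivial ρ.asModule := ‹Nontrivial V›
  have : Nontrivial (Subrepresentation ρ) := e.toEquiv.nontrivial
  obtain ⟨W, hW⟩ := IsAtomic.exists_atom (Subrepresentation ρ)
  have := Set.isSimpleOrder_Iic_iff_isAtom.mpr hW
  exact ⟨W, (subrepresentationOrderIsoIic W).isSimpleOrder⟩

theorem isCompl_toSubmodule {ρ : Representation k G V} {W U : Subrepresentation ρ}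
    (h : IsCompl W U) : IsCompl W.toSubmodule U.toSubmodule := by
  constructor
  · rw [disjoint_iff, ← Subrepresentation.toSubmodule_inf, h.inf_eq_bot]; rfl
  · rw [codisjoint_iff, ← Subrepresentation.toSubmodule_sup, h.sup_eq_top]; rfl

theorem character_eq_add_of_isCompl {ρ : Representation k G V} [FiniteDimensional k V]
    {W U : Subrepresentation ρ} (h : IsCompl W U) (g : G) :
    ρ.character g = W.toRepresentation.character g + U.toRepresentation.character g := by
  let e := Submodule.prodEquivOfIsCompl _ _ (isCompl_toSubmodule h)
  have hconj : ρ g = e.conj ((W.toRepresentation g).prodMap (U.toRepresentation g)) := by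
    refine LinearMap.ext fun v ↦ ?_
    obtain ⟨⟨w, u⟩, rfl⟩ := e.surjective v
    simp [e, LinearEquiv.conj_apply, Subrepresentation.toRepresentation]
  rw [character, hconj, LinearMap.trace_conj', LinearMap.trace_prodMap', character, character]

theorem exists_isProj_commute [Finite G] [NeZero (Nat.card G : k)] {ρ : Representation k G V}
    (W : Subrepresentation ρ) :
    ∃ π : Module.End k V, LinearMap.IsProj W.toSubmodule π ∧ ∀ g, Commute π (ρ g) := by
  obtain ⟨U, hU⟩ := exists_isCompl W
  have h := isCompl_toSubmodule hU
  refine ⟨W.toSubmodule.projection _ h,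
    ⟨Submodule.projection_apply_mem h, fun w ↦ Submodule.projection_apply_of_mem_left h⟩,
    fun g ↦ (LinearMap.IsIdempotentElem.commute_iff
      (Submodule.isIdempotentElem_projection h)).mpr ⟨?_, ?_⟩⟩
  · rw [Submodule.range_projection]; exact fun _ hw ↦ W.apply_mem_toSubmodule g hw
  · rw [Submodule.ker_projection]; exact fun _ hu ↦ U.apply_mem_toSubmodule g hu

theorem span_range_eq_top_of_isIrreducible [IsAlgClosed k] [FiniteDimensional k V]
    (ρ : Representation k G V) [ρ.IsIrreducible] :
    Submodule.span k (Set.range ρ) = ⊤ := by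
  have : Module.Finite (Module.End k[G] ρ.asModule) ρ.asModule :=
    Module.Finite.of_restrictScalars_finite k _ _
  refine Submodule.eq_top_iff'.mpr fun T ↦ ?_
  let f : Module.End (Module.End k[G] ρ.asModule) ρ.asModule :=
    { toFun := T
      map_add' := map_add T
      map_smul' e v := by
        obtain ⟨c, rfl⟩ := (IsSimpleModule.algebraMap_end_bijective_of_isAlgClosed (A := k[G])
          (V := ρ.asModule) k).2 e
        exact map_smul T c v }
  obtain ⟨r, hr⟩ := Module.Finite.toModuleEnd_moduleEnd_surjective f
  have hT : T = ρ.asAlgebraHom r := LinearMap.ext fun v ↦ congr($hr.symm v)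
  rw [hT, asAlgebraHom_def, MonoidAlgebra.lift_apply]
  exact Submodule.sum_mem _ fun g _ ↦ Submodule.smul_mem _ _ (Submodule.subset_span ⟨g, rfl⟩)

end RepresentationBasics

theorem isIrreducible_of_simple {k G : Type*} [Field k] [Group G] (V : FDRep k G)
    [Simple V] : Representation.IsIrreducible V.ρ := by
  let ι (W : Subrepresentation V.ρ) : FDRep.of W.toRepresentation ⟶ V :=
    ⟨FGModuleCat.ofHom W.toSubmodule.subtype, fun _ ↦ rfl⟩
  have hι (W) : Mono (ι W) := ConcreteCategory.mono_of_injective _ W.toSubmodule.injective_subtype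
  refine { exists_pair_ne := ⟨⊥, ⊤, fun h ↦ id_nonzero V ?_⟩, eq_bot_or_eq_top := fun W ↦ ?_ }
  · ext v
    exact (h ▸ Submodule.mem_top : v ∈ (⊥ : Subrepresentation V.ρ).toSubmodule)
  · by_cases h0 : ι W = 0
    · exact .inl <| bot_unique fun v hv ↦ congr($h0 ⟨v, hv⟩)
    · have := (Simple.mono_isIso_iff_nonzero (ι W)).mpr h0
      refine .inr <| top_unique fun v _ ↦ ?_
      obtain ⟨w, rfl⟩ := (ConcreteCategory.bijective_of_isIso (ι W)).2 v
      exact w.2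

section TwistedIndicator
open Representation Module

variable {k G V : Type*} [Field k] [Group G] [AddCommGroup V] [Module k V]

theorem trace_eq_one_of_isProj [FiniteDimensional k V] {U : Submodule k V} {f : Module.End k V}
    (hf : LinearMap.IsProj U f) {x : V} (hx : x ∈ U) (h0 : x ≠ 0)
    (h : ∀ y ∈ U, ∃ c : k, y = c • x) : LinearMap.trace k V f = 1 := by
  have hrank : finrank k U = 1 := by
    refine (finrank_eq_one_iff_of_nonzero' (⟨x, hx⟩ : U) (by simpa using h0)).mpr fun y ↦ ?_
    obtain ⟨c, hc⟩ := h y y.2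
    exact ⟨c, Subtype.ext hc.symm⟩
  rw [hf.trace, hrank, Nat.cast_one]

theorem trace_eq_of_apply_eq_swap [FiniteDimensional k V] {f : Module.End k (V →ₗ[k] V →ₗ[k] k)}
    {A B : Module.End k V} (hf : ∀ ω u v, f ω u v = ω (A v) (B u)) :
    LinearMap.trace k _ f = LinearMap.trace k V (A * B) := by
  let b := Module.finBasis k V
  let β : Basis _ k (V →ₗ[k] V →ₗ[k] k) := b.linearMap b.dualBasis
  have hβ (i j) (u v : V) : β (i, j) u v = b.repr u j * b.repr v i := by
    have : β (i, j) = (b.coord j).smulRight (b.coord i) := b.ext fun l ↦ by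
      simp [β, Basis.linearMap_apply_apply, Finsupp.single_apply, eq_comm]
    simp [this]
  have hrepr (ω i j) : β.repr ω (i, j) = ω (b j) (b i) := by
    simp [β, Matrix.stdBasis, LinearMap.toMatrix_apply]
  rw [LinearMap.trace_eq_matrix_trace k β, LinearMap.trace_eq_matrix_trace k b,
    LinearMap.toMatrix_mul, Matrix.trace, Fintype.sum_prod_type_right, Matrix.trace]
  simp [LinearMap.toMatrix_apply, Matrix.mul_apply, hrepr, hf, hβ]

/-- The bilinear forms `ω` on `V` with `ω (ρ (τ g) u) (ρ g v) = ω u v`. -/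
def invariantForms (ρ : Representation k G V) (τ : G →* G) : Submodule k (V →ₗ[k] V →ₗ[k] k) where
  carrier := {ω | ∀ g u v, ω (ρ (τ g) u) (ρ g v) = ω u v}
  add_mem' hω hω' g u v := by simp [hω g u v, hω' g u v]
  zero_mem' _ _ _ := rfl
  smul_mem' c ω hω g u v := by simp [hω g u v]

theorem mem_invariantForms {ρ : Representation k G V} {τ : G →* G} {ω : V →ₗ[k] V →ₗ[k] k} :
    ω ∈ invariantForms ρ τ ↔ ∀ g u v, ω (ρ (τ g) u) (ρ g v) = ω u v := Iff.rfl

theorem flip_mem_invariantForms {ρ : Representation k G V} {τ : G →* G}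
    (hτ : Function.Involutive τ) {ω : V →ₗ[k] V →ₗ[k] k} (hω : ω ∈ invariantForms ρ τ) :
    ω.flip ∈ invariantForms ρ τ :=
  fun g u v ↦ by simpa [hτ g] using hω (τ g) v u

theorem injective_of_mem_invariantForms {ρ : Representation k G V} {τ : G →* G}
    [ρ.IsIrreducible] (hτ : Function.Surjective τ) {ω : V →ₗ[k] V →ₗ[k] k}
    (hω : ω ∈ invariantForms ρ τ) (h0 : ω ≠ 0) : Function.Injective ω := by
  have := isIrreducible_comp_of_surjective (ρ := ρ) hτ
  let f : IntertwiningMap (ρ.comp τ : Representation k G V) ρ.dual :=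
    ω.intertwiningMap_of_isIntertwiningMap _ _ fun g u ↦ LinearMap.ext fun v ↦ by
      simpa [Dual.transpose] using hω g u (ρ g⁻¹ v)
  refine (IsIrreducible.injective_or_eq_zero f).resolve_right fun hf ↦ h0 ?_
  exact congr(($hf).toLinearMap)

theorem exists_eq_smul_of_mem_invariantForms [FiniteDimensional k V] [IsAlgClosed k]
    {ρ : Representation k G V} {τ : G →* G} [ρ.IsIrreducible] (hτ : Function.Surjective τ)
    {ω η : V →ₗ[k] V →ₗ[k] k} (hω : ω ∈ invariantForms ρ τ) (h0 : ω ≠ 0)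
    (hη : η ∈ invariantForms ρ τ) : ∃ c : k, η = c • ω := by
  obtain ⟨e, he⟩ : ∃ e : V ≃ₗ[k] Dual k V, ∀ v, e v = ω v :=
    ⟨LinearMap.linearEquivOfInjective ω (injective_of_mem_invariantForms hτ hω h0)
      Subspace.dual_finrank_eq.symm, fun _ ↦ rfl⟩
  have he_map (g v) : e (ρ (τ g) v) = e v ∘ₗ ρ g⁻¹ := LinearMap.ext fun w ↦ by
    simpa [he] using hω g v (ρ g⁻¹ w)
  have hη_map (g v) : η (ρ (τ g) v) = η v ∘ₗ ρ g⁻¹ := LinearMap.ext fun w ↦ by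
    simpa using hη g v (ρ g⁻¹ w)
  let f : IntertwiningMap (ρ.comp τ : Representation k G V) (ρ.comp τ : Representation k G V) :=
    (e.symm.toLinearMap ∘ₗ η).intertwiningMap_of_isIntertwiningMap _ _ fun g v ↦ by
      simp [LinearEquiv.symm_apply_eq, hη_map, he_map]
  have := isIrreducible_comp_of_surjective (ρ := ρ) hτ
  obtain ⟨c, hc⟩ :=
    (IsIrreducible.algebraMap_intertwiningMap_bijective_of_isAlgClosed (k := k)).surjective f
  refine ⟨c, LinearMap.ext fun v ↦ ?_⟩
  have hv : e.symm (η v) = c • v := congr($hc v).symm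
  rw [LinearMap.smul_apply, ← he, ← map_smul, ← hv, e.apply_symm_apply]

theorem flip_eq_or_eq_neg_of_mem_invariantForms [FiniteDimensional k V] [IsAlgClosed k]
    {ρ : Representation k G V} {τ : G →* G} [ρ.IsIrreducible] (hτ : Function.Involutive τ)
    {ω : V →ₗ[k] V →ₗ[k] k} (hω : ω ∈ invariantForms ρ τ) : ω.flip = ω ∨ ω.flip = -ω := by
  by_cases h0 : ω = 0
  · exact .inl (h0 ▸ rfl)
  obtain ⟨ε, hε⟩ := exists_eq_smul_of_mem_invariantForms hτ.surjective hω h0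
    (flip_mem_invariantForms hτ hω)
  have hswap (u v) : ω v u = ε * ω u v := congr($hε u v)
  obtain ⟨u, v, huv⟩ : ∃ u v, ω u v ≠ 0 := by
    by_contra! h
    exact h0 (LinearMap.ext₂ h)
  have hεε : ε * ε = 1 := mul_right_cancel₀ huv (by rw [mul_assoc, ← hswap, ← hswap, one_mul])
  refine (mul_self_eq_one_iff.mp hεε).imp (fun h ↦ LinearMap.ext₂ fun u v ↦ ?_)
    fun h ↦ LinearMap.ext₂ fun u v ↦ ?_
  · rw [LinearMap.flip_apply, hswap, h, one_mul]
  · rw [LinearMap.flip_apply, hswap, h, neg_one_mul, LinearMap.neg_apply, LinearMap.neg_apply]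

variable [Fintype G]

/-- The Frobenius–Schur indicator of the character of `ρ` twisted by `τ`, which is the average of
the character over the elements `τ g * g`. -/
noncomputable def twistedIndicator (ρ : Representation k G V) (τ : G →* G) : k :=
  (Nat.card G : k)⁻¹ * ∑ g, ρ.character (τ g * g)

/-- The averaging operator `ω ↦ (fun u v ↦ |G|⁻¹ ∑ g, ω (ρ (τ g) u) (ρ g v))` on bilinear forms. -/
noncomputable def twistedAverage (ρ : Representation k G V) (τ : G →* G) :
    Module.End k (V →ₗ[k] V →ₗ[k] k) :=
  (Nat.card G : k)⁻¹ • ∑ g, LinearMap.lcomp k (V →ₗ[k] k) (ρ (τ g)) ∘ₗ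
    (LinearMap.llcomp k V (V →ₗ[k] k) (V →ₗ[k] k) (LinearMap.lcomp k k (ρ g)))

theorem twistedAverage_apply (ρ : Representation k G V) (τ : G →* G) (ω : V →ₗ[k] V →ₗ[k] k)
    (u v : V) :
    twistedAverage ρ τ ω u v = (Nat.card G : k)⁻¹ * ∑ g, ω (ρ (τ g) u) (ρ g v) := by
  simp [twistedAverage]

theorem isProj_twistedAverage [NeZero (Nat.card G : k)] (ρ : Representation k G V) (τ : G →* G) :
    LinearMap.IsProj (invariantForms ρ τ) (twistedAverage ρ τ) where
  map_mem ω h u v := by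
    simp_rw [twistedAverage_apply, ← Module.End.mul_apply, ← map_mul]
    congr 1
    exact Fintype.sum_equiv (Equiv.mulRight h) _ _ fun g ↦ by simp
  map_id ω hω := LinearMap.ext₂ fun u v ↦ by
    simp [twistedAverage_apply, mem_invariantForms.mp hω, NeZero.ne (Nat.card G : k),
      ← Nat.card_eq_fintype_card]

variable [FiniteDimensional k V]

theorem trace_lflip_comp_twistedAverage (ρ : Representation k G V) (τ : G →* G) :
    LinearMap.trace k _ (LinearMap.lflip.toLinearMap ∘ₗ twistedAverage ρ τ) =
      twistedIndicator ρ τ := by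
  rw [twistedAverage, LinearMap.comp_smul, map_smul, smul_eq_mul, twistedIndicator,
    ← LinearMap.compRight_apply k, map_sum, map_sum]
  congr 1
  refine Finset.sum_congr rfl fun g _ ↦ ?_
  rw [character, map_mul ρ]
  exact trace_eq_of_apply_eq_swap fun _ _ _ ↦ rfl

theorem twistedIndicator_eq_zero [NeZero (Nat.card G : k)] {ρ : Representation k G V} {τ : G →* G}
    (h : invariantForms ρ τ = ⊥) : twistedIndicator ρ τ = 0 := by
  have : twistedAverage ρ τ = 0 := LinearMap.ext fun ω ↦
    (Submodule.mem_bot k).mp (h ▸ (isProj_twistedAverage ρ τ).map_mem ω)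
  rw [← trace_lflip_comp_twistedAverage, this, LinearMap.comp_zero, map_zero]

theorem twistedIndicator_eq_of_flip_eq_smul [IsAlgClosed k] [NeZero (Nat.card G : k)]
    {ρ : Representation k G V} {τ : G →* G} [ρ.IsIrreducible] (hτ : Function.Surjective τ)
    {ω : V →ₗ[k] V →ₗ[k] k} (hω : ω ∈ invariantForms ρ τ) (h0 : ω ≠ 0) {ε : k}
    (hε : ω.flip = ε • ω) : twistedIndicator ρ τ = ε := by
  have hP := isProj_twistedAverage ρ τ
  have hflip : LinearMap.lflip.toLinearMap ∘ₗ twistedAverage ρ τ = ε • twistedAverage ρ τ := by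
    refine LinearMap.ext fun η ↦ ?_
    obtain ⟨c, hc⟩ := exists_eq_smul_of_mem_invariantForms hτ hω h0 (hP.map_mem η)
    rw [LinearMap.smul_apply, LinearMap.comp_apply, hc, map_smul, smul_comm]
    exact congr(c • $hε)
  have htrace : LinearMap.trace k _ (twistedAverage ρ τ) = 1 :=
    trace_eq_one_of_isProj (V := V →ₗ[k] V →ₗ[k] k) hP hω h0 fun η hη ↦
      exists_eq_smul_of_mem_invariantForms hτ hω h0 hη
  rw [← trace_lflip_comp_twistedAverage, hflip, map_smul, htrace, smul_eq_mul, mul_one]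

theorem twistedIndicator_eq_zero_or_one_or_neg_one [IsAlgClosed k] [NeZero (Nat.card G : k)]
    (ρ : Representation k G V) [ρ.IsIrreducible] {τ : G →* G} (hτ : Function.Involutive τ) :
    twistedIndicator ρ τ = 0 ∨ twistedIndicator ρ τ = 1 ∨ twistedIndicator ρ τ = -1 := by
  by_cases h : invariantForms ρ τ = ⊥
  · exact .inl (twistedIndicator_eq_zero h)
  obtain ⟨ω, hω, h0⟩ := Submodule.exists_mem_ne_zero_of_ne_bot h
  refine .inr ((flip_eq_or_eq_neg_of_mem_invariantForms hτ hω).imp (fun hε ↦ ?_) fun hε ↦ ?_)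
  · exact twistedIndicator_eq_of_flip_eq_smul hτ.surjective hω h0 (by rwa [one_smul])
  · exact twistedIndicator_eq_of_flip_eq_smul hτ.surjective hω h0 (hε.trans (neg_one_smul k ω).symm)

end TwistedIndicator

section ConjInv
open Equiv

theorem zpow_neg_apply_eq_of_zpow_apply_eq {α : Type*} {g : Perm α} {m n : ℤ} {x : α}
    (h : (g ^ m) x = (g ^ n) x) : (g ^ (-m)) x = (g ^ (-n)) x := by
  calc (g ^ (-m)) x = (g ^ (-m - n)) ((g ^ n) x) := by rw [← Perm.mul_apply, ← zpow_add]; simp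
    _ = (g ^ (-m - n)) ((g ^ m) x) := by rw [h]
    _ = (g ^ (-n)) x := by rw [← Perm.mul_apply, ← zpow_add]; congr 2; ring

-- `h` reflects each cycle of `g` about a base point; `a` is the base point of its own cycle.
theorem exists_apply_eq_self_and_conj_eq_inv {α : Type*} (g : Perm α) (a : α) :
    ∃ h : Perm α, h a = a ∧ h * g * h⁻¹ = g⁻¹ := by
  let cycle (x : α) : Quotient (Perm.SameCycle.setoid g) := ⟦x⟧
  let base : Quotient (Perm.SameCycle.setoid g) → α := Function.update Quotient.out (cycle a) a
  have hcycle {x y} : cycle x = cycle y ↔ g.SameCycle x y := Quotient.eq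
  have hbase (x) : g.SameCycle (base (cycle x)) x := by
    rw [← hcycle]
    by_cases hx : cycle x = cycle a
    · simp only [base, hx, Function.update_self]
    · simp only [base, Function.update_of_ne hx, cycle, Quotient.out_eq]
  choose i hi using id hbase
  let h (x : α) : α := (g ^ (-i x)) (base (cycle x))
  have hh {x : α} {m : ℤ} (hm : (g ^ m) (base (cycle x)) = x) :
      h x = (g ^ (-m)) (base (cycle x)) :=
    zpow_neg_apply_eq_of_zpow_apply_eq ((hi x).trans hm.symm)
  have hcycle_h (x) : cycle (h x) = cycle x :=
    hcycle.mpr (Perm.sameCycle_zpow_left.mpr (hbase x))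
  have hinv (x) : h (h x) = x := by
    rw [hh (m := -i x) (by rw [hcycle_h]), hcycle_h, neg_neg, hi]
  refine ⟨⟨h, h, hinv, hinv⟩, ?_, ?_⟩
  · have ha : base (cycle a) = a := Function.update_self ..
    simpa [ha] using hh (x := a) (m := 0) ha
  · refine mul_inv_eq_of_eq_mul (Perm.ext fun x ↦ ?_)
    have hgx : cycle (g x) = cycle x := hcycle.mpr (Perm.sameCycle_apply_left.mpr (.refl g x))
    have : (g ^ (1 + i x)) (base (cycle (g x))) = g x := by
      rw [hgx, zpow_one_add, Perm.mul_apply, hi]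
    calc h (g x) = (g ^ (-(1 + i x))) (base (cycle x)) := by rw [hh this, hgx]
      _ = g⁻¹ (h x) := by rw [neg_add, zpow_add, zpow_neg_one, Perm.mul_apply]

end ConjInv

section Gelfand
open Representation

-- Gelfand's trick: an element of the centralizer of the image of `φ` is an average over `H` of a
-- combination of the `ρ g`, and the average of `ρ g` is the average of its adjoint `ρ g⁻¹`.
theorem apply_comm_of_forall_commute {k G H V : Type*} [Field k] [IsAlgClosed k] [Group G] [Group H]
    [Finite H] [NeZero (Nat.card H : k)] [AddCommGroup V] [Module k V] [FiniteDimensional k V]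
    {ρ : Representation k G V} [ρ.IsIrreducible] {φ : H →* G}
    (hφ : ∀ g, ∃ h, φ h * g * (φ h)⁻¹ = g⁻¹) {ω : V →ₗ[k] V →ₗ[k] k}
    (hω : ω ∈ invariantForms ρ (MonoidHom.id G)) {T : Module.End k V}
    (hT : ∀ h, Commute T (ρ (φ h))) (u v : V) : ω (T u) v = ω u (T v) := by
  cases nonempty_fintype H
  have hadj (g u v) : ω (ρ g u) v = ω u (ρ g⁻¹ v) := by
    simpa using hω g u (ρ g⁻¹ v)
  let E (S : Module.End k V) : Module.End k V := ∑ h, ρ (φ h) * S * ρ (φ h)⁻¹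
  have hE_conj (h g) : E (ρ (φ h * g * (φ h)⁻¹)) = E (ρ g) :=
    Fintype.sum_equiv (Equiv.mulRight h) _ _ fun _ ↦ by simp [mul_assoc]
  have hE_inv (g) : E (ρ g⁻¹) = E (ρ g) := by
    obtain ⟨h, hh⟩ := hφ g
    rw [← hh, hE_conj]
  have hE (S : Module.End k V) (u v : V) : ω (E S u) v = ω u (E S v) := by
    have hS : S ∈ Submodule.span k (Set.range ρ) := by
      simp [span_range_eq_top_of_isIrreducible ρ]
    induction hS using Submodule.span_induction with
    | mem _ hS =>
      obtain ⟨g, rfl⟩ := hS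
      calc ω (E (ρ g) u) v = ω u (E (ρ g⁻¹) v) := by
            simp only [E, LinearMap.sum_apply, map_sum, Module.End.mul_apply, hadj, inv_inv]
        _ = ω u (E (ρ g) v) := by rw [hE_inv]
    | zero => simp [E]
    | add S S' _ _ ih ih' =>
      have : E (S + S') = E S + E S' := by simp [E, mul_add, add_mul, Finset.sum_add_distrib]
      simp [this, ih, ih']
    | smul c S _ ih =>
      have : E (c • S) = c • E S := by simp [E, Finset.smul_sum]
      simp [this, ih]
  have hconj (h) : ρ (φ h) * T * ρ (φ h)⁻¹ = T := by
    rw [← (hT h).eq, mul_assoc, ← map_mul, mul_inv_cancel, map_one, mul_one]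
  have hET : E T = (Nat.card H : k) • T := by
    simp [E, hconj, Nat.cast_smul_eq_nsmul]
  refine mul_left_cancel₀ (NeZero.ne (Nat.card H : k)) ?_
  simpa only [hET, LinearMap.smul_apply, map_smul, smul_eq_mul] using hE T u v

end Gelfand

section GelfandRestriction
open Representation

variable {k G H V : Type*} [Field k] [IsAlgClosed k] [AddCommGroup V] [Module k V]
  [FiniteDimensional k V]

theorem eq_zero_of_forall_mem_subrepresentation [Group G] [Group H] [Finite H]
    [NeZero (Nat.card H : k)] {ρ : Representation k G V} [ρ.IsIrreducible] {φ : H →* G}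
    (hφ : ∀ g, ∃ h, φ h * g * (φ h)⁻¹ = g⁻¹) {ω : V →ₗ[k] V →ₗ[k] k}
    (hω : ω ∈ invariantForms ρ (MonoidHom.id G))
    (W : Subrepresentation (ρ.comp φ : Representation k H V)) [Nontrivial W.toSubmodule]
    (h : ∀ u ∈ W.toSubmodule, ∀ v ∈ W.toSubmodule, ω u v = 0) : ω = 0 := by
  by_contra h0
  obtain ⟨π, hπ, hcomm⟩ := exists_isProj_commute W
  obtain ⟨⟨w, hw⟩, hw0⟩ := exists_ne (0 : W.toSubmodule)
  refine hw0 (Subtype.ext (injective_of_mem_invariantForms Function.surjective_id hω h0 ?_))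
  ext v
  calc ω w v = ω (π w) v := by rw [hπ.map_id w hw]
    _ = ω w (π v) := apply_comm_of_forall_commute hφ hω hcomm w v
    _ = ω 0 v := by rw [h w hw _ (hπ.map_mem v), map_zero, LinearMap.zero_apply]

open Equiv in
theorem exists_ofSubtype_conj_eq_inv {α : Type*} [DecidableEq α] (a : α) (g : Perm α) :
    ∃ h : Perm {x // x ≠ a}, Perm.ofSubtype h * g * (Perm.ofSubtype h)⁻¹ = g⁻¹ := by
  obtain ⟨h, ha, hh⟩ := exists_apply_eq_self_and_conj_eq_inv g a
  have hne (x) : h x ≠ a ↔ x ≠ a := by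
    conv_lhs => rw [← ha]
    exact h.injective.ne_iff
  refine ⟨h.subtypePerm hne, ?_⟩
  rwa [Perm.ofSubtype_subtypePerm (p := (· ≠ a)) hne fun x hx hxa ↦ hx (hxa ▸ ha)]

theorem eq_zero_of_perm_invariant_of_flip_eq_neg [CharZero k] {α : Type*} [Finite α]
    {ρ : Representation k (Equiv.Perm α) V} [ρ.IsIrreducible] {ω : V →ₗ[k] V →ₗ[k] k}
    (hω : ω ∈ invariantForms ρ (MonoidHom.id _)) (hflip : ω.flip = -ω) : ω = 0 := by
  induction hn : Nat.card α generalizing α V with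
  | zero =>
    have : IsEmpty α := Finite.card_eq_zero_iff.mp hn
    obtain ⟨v, -, hv⟩ := finrank_eq_one_iff'.mp (IsIrreducible.finrank_eq_one_of_isMulCommutative ρ)
    have hv0 : ω v v = 0 := self_eq_neg.mp congr($hflip v v)
    ext u w
    obtain ⟨⟨b, rfl⟩, ⟨c, rfl⟩⟩ := And.intro (hv u) (hv w)
    simp [hv0]
  | succ n ih =>
    obtain ⟨a⟩ : Nonempty α := Finite.card_pos_iff.mp (by lia)
    have := nontrivial_of_isIrreducible ρ
    obtain ⟨W, hW⟩ := exists_isIrreducible_subrepresentation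
      (ρ.comp (Equiv.Perm.ofSubtype (p := (· ≠ a))) : Representation k _ V)
    have := nontrivial_of_isIrreducible W.toRepresentation
    have hcard : Nat.card {x // x ≠ a} = n := by
      cases nonempty_fintype α
      rw [Nat.card_eq_fintype_card] at hn ⊢
      simp [Fintype.card_subtype_compl, hn]
    refine eq_zero_of_forall_mem_subrepresentation (exists_ofSubtype_conj_eq_inv a) hω W ?_
    have hωW : ω.domRestrict₁₂ W.toSubmodule W.toSubmodule = 0 :=
      ih (ρ := W.toRepresentation) (fun _ _ _ ↦ hω _ _ _)
        (LinearMap.ext₂ fun u v ↦ congr($hflip u v)) hcard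
    exact fun u hu v hv ↦ congr($hωW ⟨u, hu⟩ ⟨v, hv⟩)

end GelfandRestriction

section PermIndicator
open Representation Module

universe u
variable {k : Type*} {V : Type u} [Field k] [AddCommGroup V] [Module k V] [FiniteDimensional k V]

theorem exists_ne_zero_mem_invariantForms_of_character_inv {G : Type*} [Group G] [Finite G]
    [IsAlgClosed k] [CharZero k] {ρ : Representation k G V} [ρ.IsIrreducible]
    (hχ : ∀ g, ρ.character g⁻¹ = ρ.character g) :
    ∃ ω ∈ invariantForms ρ (MonoidHom.id G), ω ≠ 0 := by
  cases nonempty_fintype G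
  have : Invertible (Nat.card G : k) := invertibleOfNonzero (NeZero.ne _)
  have hrank : finrank k (IntertwiningMap ρ ρ.dual) = 1 := by
    rw [← Nat.cast_inj (R := k), ← IsIrreducible.finrank_intertwiningMap_self ρ,
      ← card_inv_mul_sum_char_mul_char_eq_finrank, ← card_inv_mul_sum_char_mul_char_eq_finrank]
    simp only [char_dual, hχ]
  have := nontrivial_of_finrank_pos (hrank ▸ one_pos)
  obtain ⟨f, hf⟩ := exists_ne (0 : IntertwiningMap ρ ρ.dual)
  refine ⟨f.toLinearMap, fun g u v ↦ ?_, fun h ↦ hf (IntertwiningMap.ext h)⟩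
  calc f (ρ g u) (ρ g v) = f u (ρ g⁻¹ (ρ g v)) :=
        congr($(IntertwiningMap.isIntertwining ρ ρ.dual f g u) (ρ g v))
    _ = f u v := by simp

theorem twistedIndicator_perm_eq_one [IsAlgClosed k] [CharZero k] {α : Type*} [Finite α]
    [Fintype (Equiv.Perm α)] (ρ : Representation k (Equiv.Perm α) V) [ρ.IsIrreducible] :
    twistedIndicator ρ (MonoidHom.id _) = 1 := by
  cases nonempty_fintype α
  have hχ (g) : ρ.character g⁻¹ = ρ.character g := by
    obtain ⟨h, hh⟩ := isConj_iff.mp <|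
      Equiv.Perm.isConj_iff_cycleType_eq.mpr (Equiv.Perm.cycleType_inv g)
    rw [← char_conj ρ g⁻¹ h, hh]
  obtain ⟨ω, hω, h0⟩ := exists_ne_zero_mem_invariantForms_of_character_inv hχ
  refine twistedIndicator_eq_of_flip_eq_smul Function.surjective_id hω h0 ?_
  rw [one_smul]
  exact (flip_eq_or_eq_neg_of_mem_invariantForms (fun _ ↦ rfl) hω).resolve_right
    fun h ↦ h0 (eq_zero_of_perm_invariant_of_flip_eq_neg hω h)

theorem twistedIndicator_eq_add_of_isCompl {G : Type*} [Group G] [Fintype G]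
    {ρ : Representation k G V} {W U : Subrepresentation ρ} (h : IsCompl W U) (τ : G →* G) :
    twistedIndicator ρ τ =
      twistedIndicator W.toRepresentation τ + twistedIndicator U.toRepresentation τ := by
  simp only [twistedIndicator, character_eq_add_of_isCompl h, Finset.sum_add_distrib, mul_add]

theorem exists_twistedIndicator_eq_add_one {G : Type*} [Group G] [Fintype G]
    [NeZero (Nat.card G : k)] {τ : G →* G}
    (h : ∀ (W : Type u) [AddCommGroup W] [Module k W] [FiniteDimensional k W]
      (σ : Representation k G W) [σ.IsIrreducible], twistedIndicator σ τ = 1)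
    (ρ : Representation k G V) [Nontrivial V] : ∃ n : ℕ, twistedIndicator ρ τ = n + 1 := by
  induction hn : finrank k V using Nat.strong_induction_on generalizing V with
  | h n ih =>
    obtain ⟨W, hW⟩ := exists_isIrreducible_subrepresentation ρ
    obtain ⟨U, hU⟩ := exists_isCompl W
    rw [twistedIndicator_eq_add_of_isCompl hU, h, add_comm]
    rcases subsingleton_or_nontrivial U.toSubmodule with hU0 | hU0
    · refine ⟨0, ?_⟩
      simp [twistedIndicator, character, Subsingleton.elim (U.toRepresentation _) 0]
    · have hrank := Submodule.finrank_add_eq_of_isCompl (isCompl_toSubmodule hU)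
      have := nontrivial_of_isIrreducible W.toRepresentation
      have := finrank_pos (R := k) (M := W.toSubmodule)
      obtain ⟨m, hm⟩ := ih _ (by lia) U.toRepresentation rfl
      exact ⟨m + 1, by rw [hm, Nat.cast_succ]⟩

end PermIndicator

section Coinduction
open Representation

variable {k G V : Type*} [Field k] [Group G] [AddCommGroup V] [Module k V] {A : Subgroup G}

theorem trace_pi {ι : Type*} [Fintype ι] [DecidableEq ι] [FiniteDimensional k V]
    (T : Module.End k (ι → V)) :
    LinearMap.trace k _ T =
      ∑ i, LinearMap.trace k V (LinearMap.proj i ∘ₗ T ∘ₗ LinearMap.single k (fun _ ↦ V) i) := by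
  have hT : T = ∑ i, (T ∘ₗ LinearMap.single k (fun _ ↦ V) i) ∘ₗ LinearMap.proj i := by
    refine LinearMap.ext fun F ↦ ?_
    simpa using congrArg T (Finset.univ_sum_single F).symm
  nth_rw 1 [hT]
  simp only [map_sum]
  exact Fintype.sum_congr _ _ fun i ↦ LinearMap.trace_comp_comm' _ _

/-- The extension by zero to `G` of a representation of a subgroup `A`. -/
noncomputable def extendByZero (ρ : Representation k A V) (x : G) : Module.End k V :=
  if h : x ∈ A then ρ ⟨x, h⟩ else 0

theorem extendByZero_of_mem (ρ : Representation k A V) {x : G} (hx : x ∈ A) :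
    extendByZero ρ x = ρ ⟨x, hx⟩ := dif_pos hx

theorem extendByZero_of_notMem (ρ : Representation k A V) {x : G} (hx : x ∉ A) :
    extendByZero ρ x = 0 := dif_neg hx

theorem extendByZero_mul (ρ : Representation k A V) (a : A) (x : G) :
    extendByZero ρ (a * x) = ρ a * extendByZero ρ x := by
  by_cases hx : x ∈ A
  · rw [extendByZero_of_mem ρ hx, extendByZero_of_mem ρ (mul_mem a.2 hx), ← map_mul]
    rfl
  · have hax := mt (A.mul_mem_cancel_left a.2).mp hx
    rw [extendByZero_of_notMem ρ hx, extendByZero_of_notMem ρ hax, mul_zero]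

theorem mul_out_inv_mem (x : G) : x * ((x⁻¹ : G) : G ⧸ A).out ∈ A := by
  simpa only [eq_comm, QuotientGroup.eq, inv_inv] using QuotientGroup.out_eq' ((x⁻¹ : G) : G ⧸ A)

variable [Fintype (G ⧸ A)]

theorem sum_extendByZero_apply (ρ : Representation k A V) (x : G) (F : G ⧸ A → V) :
    ∑ j, extendByZero ρ (x * j.out) (F j) =
      extendByZero ρ (x * ((x⁻¹ : G) : G ⧸ A).out) (F ↑(x⁻¹)) := by
  refine Finset.sum_eq_single_of_mem _ (Finset.mem_univ _) fun j _ hj ↦ ?_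
  rw [extendByZero_of_notMem ρ fun h ↦ hj ?_, LinearMap.zero_apply]
  rw [← QuotientGroup.out_eq' j, eq_comm, QuotientGroup.eq, inv_inv]
  exact h

/-- A function in the coinduced representation is determined by its values at the inverses of
representatives of the left cosets of `A`, and these values are arbitrary. -/
noncomputable def coindEquivPi (ρ : Representation k A V) :
    coindV A.subtype ρ ≃ₗ[k] (G ⧸ A → V) where
  toFun f i := f.1 i.out⁻¹
  map_add' _ _ := rfl
  map_smul' _ _ := rfl
  invFun F := ⟨fun x ↦ ∑ j, extendByZero ρ (x * j.out) (F j), fun a x ↦ by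
    simp only [A.coe_subtype, mul_assoc, extendByZero_mul, Module.End.mul_apply, map_sum]⟩
  left_inv f := by
    ext x
    have := f.2 ⟨_, mul_out_inv_mem x⟩ ((x⁻¹ : G) : G ⧸ A).out⁻¹
    simp only [A.coe_subtype, mul_inv_cancel_right] at this
    simp only [sum_extendByZero_apply, extendByZero_of_mem ρ (mul_out_inv_mem x), this]
  right_inv F := by
    ext i
    calc ∑ j, extendByZero ρ (i.out⁻¹ * j.out) (F j) = extendByZero ρ 1 (F i) := by
          rw [sum_extendByZero_apply, inv_inv, QuotientGroup.out_eq', inv_mul_cancel]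
      _ = F i := by rw [extendByZero_of_mem ρ (one_mem A)]; exact congr($(map_one ρ) (F i))

theorem character_coind [FiniteDimensional k V] (ρ : Representation k A V) (x : G) :
    (coind A.subtype ρ).character x =
      ∑ i : G ⧸ A, LinearMap.trace k V (extendByZero ρ (i.out⁻¹ * x * i.out)) := by
  rw [character, ← LinearMap.trace_conj' _ (coindEquivPi ρ), trace_pi]
  refine Fintype.sum_congr _ _ fun i ↦ congrArg _ (LinearMap.ext fun v ↦ ?_)
  calc ∑ j : G ⧸ A, extendByZero ρ (i.out⁻¹ * x * j.out) ((Pi.single i v : G ⧸ A → V) j)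
      = extendByZero ρ (i.out⁻¹ * x * i.out) ((Pi.single i v : G ⧸ A → V) i) :=
        Finset.sum_eq_single_of_mem i (Finset.mem_univ i) fun j _ hj ↦ by simp [hj]
    _ = extendByZero ρ (i.out⁻¹ * x * i.out) v := by rw [Pi.single_eq_same]

end Coinduction

section CosetIndicator
open Representation

variable {k G V : Type*} [Field k] [Group G] [AddCommGroup V] [Module k V] {A : Subgroup G}

theorem sum_eq_sum_add_sum_of_index_two [Fintype G] [Fintype A] (hA : A.index = 2) {s : G}
    (hs : s ∉ A) {M : Type*} [AddCommMonoid M] (f : G → M) :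
    ∑ x, f x = ∑ a : A, f a + ∑ a : A, f (s * a) := by
  let e : A ≃ {x // x ∉ A} := (Equiv.mulLeft s).subtypeEquiv fun x ↦ by
    simp [Subgroup.mul_mem_iff_of_index_two hA, hs]
  have he : ∑ a : A, f (s * a) = ∑ x : {x // x ∉ A}, f x := Fintype.sum_equiv e _ _ fun _ ↦ rfl
  rw [he, ← Fintype.sum_subtype_add_sum_subtype (· ∈ A) f]
  congr!

theorem twistedIndicator_coind [Fintype G] [CharZero k] [FiniteDimensional k V]
    (ρ : Representation k A V) :
    twistedIndicator (coind A.subtype ρ) (MonoidHom.id G) =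
      (Nat.card A : k)⁻¹ * ∑ x : G, LinearMap.trace k V (extendByZero ρ (x ^ 2)) := by
  have hconj (i : G ⧸ A) :
      ∑ x : G, LinearMap.trace k V (extendByZero ρ (i.out⁻¹ * (x * x) * i.out)) =
        ∑ x : G, LinearMap.trace k V (extendByZero ρ (x ^ 2)) :=
    Fintype.sum_equiv (MulAut.conj i.out⁻¹).toEquiv _ _ fun x ↦ by simp [sq, mul_assoc]
  have hcard : (Nat.card G : k) = Nat.card A * Nat.card (G ⧸ A) := by
    rw [← Nat.cast_mul, ← A.card_mul_index, Subgroup.index]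
  simp only [twistedIndicator, character_coind, MonoidHom.id_apply]
  rw [Finset.sum_comm, Fintype.sum_congr _ _ hconj, hcard, Finset.sum_const, Finset.card_univ,
    ← Nat.card_eq_fintype_card, nsmul_eq_mul, mul_inv, mul_assoc, inv_mul_cancel_left₀]
  exact NeZero.ne _

variable [Fintype A]

/-- The average over the coset `p A` of `x ↦ χ (x ^ 2)`, where the character `χ` of `ρ` is extended
by zero to `G`. -/
noncomputable def cosetIndicator (ρ : Representation k A V) (p : G) : k :=
  (Nat.card A : k)⁻¹ * ∑ a : A, LinearMap.trace k V (extendByZero ρ ((p * a) ^ 2))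

theorem cosetIndicator_mul (ρ : Representation k A V) (p : G) (b : A) :
    cosetIndicator ρ (p * b) = cosetIndicator ρ p := by
  unfold cosetIndicator
  congr 1
  exact Fintype.sum_equiv (Equiv.mulLeft b) _ _ fun a ↦ by simp [mul_assoc]

theorem cosetIndicator_of_mul_self_eq_one [A.Normal] (ρ : Representation k A V) {s : G}
    (hs : s * s = 1) :
    cosetIndicator ρ s = twistedIndicator ρ (MulAut.conjNormal s).toMonoidHom := by
  refine congrArg _ (Fintype.sum_congr _ _ fun a ↦ ?_)
  have hmem : (s * a) ^ 2 = ↑(MulAut.conjNormal s a * a) := by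
    rw [sq, A.coe_mul, MulAut.conjNormal_apply, inv_eq_of_mul_eq_one_right hs]
    simp only [mul_assoc]
  rw [hmem, extendByZero_of_mem ρ (SetLike.coe_mem _)]
  rfl

theorem cosetIndicator_one (ρ : Representation k A V) :
    cosetIndicator ρ 1 = twistedIndicator ρ (MonoidHom.id A) := by
  refine congrArg _ (Fintype.sum_congr _ _ fun a ↦ ?_)
  rw [one_mul, sq, ← A.coe_mul, extendByZero_of_mem ρ (SetLike.coe_mem _)]
  rfl

theorem twistedIndicator_coind_of_index_two [Fintype G] [CharZero k] [FiniteDimensional k V]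
    (hA : A.index = 2) {s : G} (hs : s ∉ A) (ρ : Representation k A V) :
    twistedIndicator (coind A.subtype ρ) (MonoidHom.id G) =
      cosetIndicator ρ 1 + cosetIndicator ρ s := by
  rw [twistedIndicator_coind, sum_eq_sum_add_sum_of_index_two hA hs, mul_add]
  simp only [cosetIndicator, one_mul]

end CosetIndicator

section AlternatingGroup
open Representation

theorem eq_zero_or_eq_one_of_add_eq_natCast_add_one {k : Type*} [Field k] [CharZero k] {a b : k}
    {n : ℕ} (ha : a = 0 ∨ a = 1 ∨ a = -1) (hb : b = 0 ∨ b = 1 ∨ b = -1) (h : a + b = n + 1) :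
    a = 0 ∨ a = 1 := by
  refine ha.imp_right fun ha' ↦ ha'.resolve_right ?_
  rintro rfl
  rcases hb with rfl | rfl | rfl
  · exact Nat.cast_add_one_ne_zero (n + 1) (by push_cast; linear_combination -h)
  · exact Nat.cast_add_one_ne_zero n (by linear_combination -h)
  · exact Nat.cast_add_one_ne_zero (n + 2) (by push_cast; linear_combination -h)

theorem twistedIndicator_eq_one_of_subsingleton {k G V : Type*} [Field k] [IsAlgClosed k]
    [AddCommGroup V] [Module k V] [FiniteDimensional k V] [Group G] [Fintype G] [Subsingleton G]
    (ρ : Representation k G V) [ρ.IsIrreducible] (τ : G →* G) : twistedIndicator ρ τ = 1 := by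
  have := uniqueOfSubsingleton (1 : G)
  simp [twistedIndicator, Subsingleton.elim _ (1 : G), char_one,
    IsIrreducible.finrank_eq_one_of_isMulCommutative ρ]

variable {k V α : Type*} [Field k] [IsAlgClosed k] [CharZero k] [AddCommGroup V] [Module k V]
  [FiniteDimensional k V] [Fintype α] [DecidableEq α]

theorem cosetIndicator_alternatingGroup (ρ : Representation k (alternatingGroup α) V)
    [ρ.IsIrreducible] (p : Equiv.Perm α) : cosetIndicator ρ p = 0 ∨ cosetIndicator ρ p = 1 := by
  rcases subsingleton_or_nontrivial α with hα | hα
  · right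
    rw [Subsingleton.elim p 1, cosetIndicator_one, twistedIndicator_eq_one_of_subsingleton]
  obtain ⟨x, y, hxy⟩ := exists_pair_ne α
  let s : Equiv.Perm α := Equiv.swap x y
  have hs : s ∉ alternatingGroup α := by simp [s, Equiv.Perm.sign_swap hxy]
  have hs2 : s * s = 1 := Equiv.swap_mul_self x y
  have hτ : Function.Involutive (MulAut.conjNormal s : MulAut (alternatingGroup α)) := fun a ↦ by
    rw [← MulAut.mul_apply, ← map_mul, hs2, map_one, MulAut.one_apply]
  have h1 : cosetIndicator ρ 1 = 0 ∨ cosetIndicator ρ 1 = 1 ∨ cosetIndicator ρ 1 = -1 :=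
    cosetIndicator_one ρ ▸ twistedIndicator_eq_zero_or_one_or_neg_one ρ fun _ ↦ rfl
  have h2 : cosetIndicator ρ s = 0 ∨ cosetIndicator ρ s = 1 ∨ cosetIndicator ρ s = -1 :=
    cosetIndicator_of_mul_self_eq_one ρ hs2 ▸ twistedIndicator_eq_zero_or_one_or_neg_one ρ hτ
  have := nontrivial_of_isIrreducible ρ
  have : Nontrivial (coindV (alternatingGroup α).subtype ρ) := (coindEquivPi ρ).toEquiv.nontrivial
  obtain ⟨n, hn⟩ := exists_twistedIndicator_eq_add_one
    (fun _ _ _ _ σ _ ↦ twistedIndicator_perm_eq_one σ) (coind (alternatingGroup α).subtype ρ)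
  rw [twistedIndicator_coind_of_index_two alternatingGroup.index_eq_two hs] at hn
  by_cases hp : p ∈ alternatingGroup α
  · have hcoset : cosetIndicator ρ p = cosetIndicator ρ 1 := by
      simpa using cosetIndicator_mul ρ 1 ⟨p, hp⟩
    rw [hcoset]
    exact eq_zero_or_eq_one_of_add_eq_natCast_add_one h1 h2 hn
  · have hsp : s⁻¹ * p ∈ alternatingGroup α := by
      simp [Subgroup.mul_mem_iff_of_index_two alternatingGroup.index_eq_two, hp, hs]
    have hcoset : cosetIndicator ρ p = cosetIndicator ρ s := by
      simpa using cosetIndicator_mul ρ s ⟨_, hsp⟩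
    rw [hcoset]
    exact eq_zero_or_eq_one_of_add_eq_natCast_add_one h2 h1 ((add_comm _ _).trans hn)

end AlternatingGroup

section Map

variable {k G K V : Type*} [Field k] [Group G] [Group K] [AddCommGroup V] [Module k V]
  {B : Subgroup K} {f : K →* G}

theorem extendByZero_map (hf : Function.Injective f) (ρ : Representation k (B.map f) V) (x : K) :
    extendByZero ρ (f x) =
      extendByZero (A := B) (ρ.comp (B.equivMapOfInjective f hf).toMonoidHom) x := by
  by_cases hx : x ∈ B
  · rw [extendByZero_of_mem ρ (Subgroup.mem_map_of_mem f hx), extendByZero_of_mem _ hx]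
    rfl
  · rw [extendByZero_of_notMem ρ (mt (Subgroup.mem_map_iff_mem hf).mp hx),
      extendByZero_of_notMem _ hx]

theorem cosetIndicator_map [Fintype B] [Fintype (B.map f)] (hf : Function.Injective f)
    (ρ : Representation k (B.map f) V) {p : G} {q : K}
    (hpq : ∀ b : B, (p * f b) ^ 2 = f ((q * b) ^ 2)) :
    cosetIndicator ρ p =
      cosetIndicator (A := B) (ρ.comp (B.equivMapOfInjective f hf).toMonoidHom) q := by
  unfold cosetIndicator
  rw [Nat.card_congr (B.equivMapOfInjective f hf).toEquiv]
  congr 1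
  refine (Fintype.sum_equiv (B.equivMapOfInjective f hf).toEquiv _ _ fun b ↦ ?_).symm
  rw [← extendByZero_map, ← hpq]
  rfl

end Map

section StabCoset

variable {G : Type*} [Group G] {H : Subgroup G} {g x : G}

theorem mem_stabCoset {z : G} : z ∈ stabCoset H g ↔ z ∈ H ∧ g⁻¹ * z * g ∈ H := by
  simp only [stabCoset, Subgroup.mem_inf, Subgroup.mem_map_equiv, MulAut.conj_symm_apply]

theorem mul_mem_and_sq_mem_stabCoset_iff (hx : x ∈ H) (hsq : (g * x) ^ 2 ∈ stabCoset H g) (z : G) :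
    (x * z ∈ H ∧ (g * (x * z)) ^ 2 ∈ stabCoset H g) ↔ z ∈ stabCoset H g := by
  rw [mem_stabCoset] at hsq
  rw [mem_stabCoset, mem_stabCoset, H.mul_mem_cancel_left hx]
  refine and_congr_right fun hz ↦ ?_
  have hleft : (g * (x * z)) ^ 2 = (g * x) ^ 2 * (x⁻¹ * (g⁻¹ * z * g) * x) * z := by
    simp only [pow_two]; group
  have hright : g⁻¹ * (g * (x * z)) ^ 2 * g = x * z * (g * (x * z)) ^ 2 * (x * z)⁻¹ := by
    simp only [pow_two]; group
  rw [hright, H.mul_mem_cancel_right (inv_mem (mul_mem hx hz)),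
    H.mul_mem_cancel_left (mul_mem hx hz), and_self, hleft, H.mul_mem_cancel_right hz,
    H.mul_mem_cancel_left hsq.1, H.mul_mem_cancel_right hx, H.mul_mem_cancel_left (inv_mem hx)]

theorem nuInd_eq_zero {m : ℕ} (h : ∀ x ∈ H, (g * x) ^ m ∉ stabCoset H g)
    (χ : stabCoset H g → ℂ) : nuInd H g m χ = 0 := by
  rw [nuInd, finsum_eq_zero_of_forall_eq_zero fun x ↦ dif_neg fun hx ↦ h x hx.1 hx.2, mul_zero]

theorem nuInd_two_eq_conj_cosetIndicator [Finite G] [Fintype (stabCoset H g)] (hx : x ∈ H)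
    (hsq : (g * x) ^ 2 ∈ stabCoset H g) (V : FDRep ℂ (stabCoset H g)) :
    nuInd H g 2 V.character = starRingEnd ℂ (cosetIndicator V.ρ (g * x)) := by
  have := Fintype.ofFinite G
  have hcoset := mul_mem_and_sq_mem_stabCoset_iff hx hsq
  rw [nuInd, cosetIndicator, finsum_eq_sum_of_fintype, map_mul, map_inv₀, Complex.conj_natCast,
    map_sum]
  congr 1
  refine (Fintype.sum_of_injective (fun a : stabCoset H g ↦ x * a)
    (fun a b hab ↦ Subtype.ext (mul_left_cancel hab)) _ _ (fun y hy ↦ ?_) fun a ↦ ?_).symm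
  · refine dif_neg fun hmem ↦ hy ⟨⟨x⁻¹ * y, (hcoset _).mp ?_⟩, mul_inv_cancel_left x y⟩
    rwa [mul_inv_cancel_left]
  · have hmem := (hcoset a).mpr a.2
    rw [dif_pos hmem, mul_assoc, extendByZero_of_mem _ hmem.2]
    rfl

end StabCoset

section FixingSubgroup
open Equiv.Perm MulAction

theorem smul_union_smul_eq {G β : Type*} [Group G] [MulAction G β] {s : Set β} {g x : G}
    (hx : x ∈ fixingSubgroup G s) (hsq : (g * x) ^ 2 ∈ fixingSubgroup G s) :
    (g * x) • (s ∪ g • s) = s ∪ g • s := by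
  have hxs : x • s = s := fixingSubgroup_le_stabilizer G s hx
  have hsqs : (g * x) ^ 2 • s = s := fixingSubgroup_le_stabilizer G s hsq
  have hgs : g • s = (g * x) • s := by rw [mul_smul, hxs]
  rw [hgs, Set.smul_set_union, smul_smul, ← sq, hsqs, Set.union_comm]

theorem mul_ofSubtype_sq_eq {α : Type*} {t : Set α} {p : Equiv.Perm α} (hp : ∀ i, p i ∉ t ↔ i ∉ t)
    (hsq : p ^ 2 ∈ fixingSubgroup (Equiv.Perm α) t) (a : Equiv.Perm {i // i ∉ t}) :
    (p * ofSubtype a) ^ 2 = ofSubtype ((p.subtypePerm hp * a) ^ 2) := by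
  ext i
  by_cases hi : i ∈ t
  · have hpi : p i ∈ t := by simpa using (hp i).not.mpr (not_not.mpr hi)
    have := (mem_fixingSubgroup_iff _).mp hsq i hi
    simp_all [sq, ofSubtype_apply_of_not_mem]
  · let q : Equiv.Perm {i // i ∉ t} := p.subtypePerm hp * a
    have hcoe (j : {i // i ∉ t}) : (p * ofSubtype a) j = q j := by simp [q]
    rw [ofSubtype_apply_of_mem (p := (· ∉ t)) _ hi, sq, mul_apply, hcoe ⟨i, hi⟩, hcoe]
    rfl

variable {α : Type*} [Fintype α] [DecidableEq α]

theorem map_ofSubtype_alternatingGroup (t : Set α) :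
    (alternatingGroup {i // i ∉ t}).map ofSubtype =
      fixingSubgroup (Equiv.Perm α) t ⊓ alternatingGroup α := by
  ext z
  have hfix : z ∈ fixingSubgroup (Equiv.Perm α) t ↔
      z ∈ (ofSubtype : Equiv.Perm {i // i ∉ t} →* Equiv.Perm α).range := by
    rw [mem_range_ofSubtype_iff, mem_fixingSubgroup_iff]
    refine forall_congr' fun i ↦ ?_
    simp only [Equiv.Perm.smul_def, SetLike.mem_coe, mem_support, ne_eq, Set.mem_ofPred_eq,
      not_imp_comm, Decidable.not_not]
  rw [Subgroup.mem_inf, hfix, Subgroup.mem_map, MonoidHom.mem_range]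
  grind [sign_ofSubtype, mem_alternatingGroup]

theorem stabCoset_fixingSubgroup_inf_alternatingGroup (s : Set α) (g : Equiv.Perm α) :
    stabCoset (fixingSubgroup (Equiv.Perm α) s ⊓ alternatingGroup α) g =
      fixingSubgroup (Equiv.Perm α) (s ∪ g • s) ⊓ alternatingGroup α := by
  have hconj : (alternatingGroup α).map (MulAut.conj g).toMonoidHom = alternatingGroup α :=
    Subgroup.Normal.map_conj_eq _ g
  rw [stabCoset, Subgroup.map_inf _ _ _ (MulAut.conj g).injective, hconj, fixingSubgroup_union,
    SubMulAction.fixingSubgroup_smul_eq_fixingSubgroup_map_conj, inf_inf_inf_comm, inf_idem]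

theorem cosetIndicator_fixingSubgroup_inf_alternatingGroup {k V : Type*} [Field k] [IsAlgClosed k]
    [CharZero k] [AddCommGroup V] [Module k V] [FiniteDimensional k V] {t : Set α}
    {A : Subgroup (Equiv.Perm α)} [Fintype A]
    (hA : A = fixingSubgroup (Equiv.Perm α) t ⊓ alternatingGroup α) (ρ : Representation k A V)
    [ρ.IsIrreducible] {p : Equiv.Perm α} (hp : p • t = t)
    (hsq : p ^ 2 ∈ fixingSubgroup (Equiv.Perm α) t) :
    cosetIndicator ρ p = 0 ∨ cosetIndicator ρ p = 1 := by
  rw [← map_ofSubtype_alternatingGroup] at hA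
  subst hA
  have hpt (i : α) : p i ∉ t ↔ i ∉ t := by
    have := Set.smul_mem_smul_set_iff (a := p) (s := t) (x := i)
    rw [hp] at this
    exact not_congr this
  rw [cosetIndicator_map ofSubtype_injective ρ fun b ↦ mul_ofSubtype_sq_eq hpt hsq b]
  have := isIrreducible_comp_of_surjective (ρ := ρ) (φ := MulEquiv.toMonoidHom _)
    ((alternatingGroup {i // i ∉ t}).equivMapOfInjective ofSubtype ofSubtype_injective).surjective
  exact cosetIndicator_alternatingGroup _ _

end FixingSubgroup

theorem fixSubgroup_eq_fixingSubgroup (n ℓ : ℕ) :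
    fixSubgroup n ℓ = fixingSubgroup (Equiv.Perm (Fin n)) {i : Fin n | ℓ ≤ (i : ℕ)} :=
  Subgroup.ext fun _ ↦ (mem_fixingSubgroup_iff (Equiv.Perm (Fin n))).symm

theorem stmt_15_general {α : Type*} [Fintype α] [DecidableEq α] (s : Set α) (g : Equiv.Perm α)
    (V : FDRep ℂ (stabCoset (fixingSubgroup (Equiv.Perm α) s ⊓ alternatingGroup α) g)) [Simple V] :
    nuInd (fixingSubgroup (Equiv.Perm α) s ⊓ alternatingGroup α) g 2 V.character = 0 ∨
      nuInd (fixingSubgroup (Equiv.Perm α) s ⊓ alternatingGroup α) g 2 V.character = 1 := by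
  by_cases! h : ∃ x ∈ fixingSubgroup (Equiv.Perm α) s ⊓ alternatingGroup α,
    (g * x) ^ 2 ∈ stabCoset (fixingSubgroup (Equiv.Perm α) s ⊓ alternatingGroup α) g
  · obtain ⟨x, hx, hsq⟩ := h
    have hS := stabCoset_fixingSubgroup_inf_alternatingGroup s g
    have := isIrreducible_of_simple V
    rw [nuInd_two_eq_conj_cosetIndicator hx hsq, map_eq_zero,
      map_eq_one_iff _ (starRingEnd ℂ).injective]
    exact cosetIndicator_fixingSubgroup_inf_alternatingGroup hS V.ρ
      (smul_union_smul_eq hx.1 (mem_stabCoset.mp hsq).1.1) (hS ▸ hsq).1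
  · exact .inl (nuInd_eq_zero h _)

/-- Let `A_ℓ ⊆ S_n` (`ℓ < n`) be the even permutations fixing each of `ℓ+1,…,n`. All simple
objects of `C(S_n, A_ℓ)` have Frobenius–Schur indicator `0` or `1`: for every `g ∈ S_n` and
every irreducible complex character `χ` of `S(g) = A_ℓ ∩ gA_ℓg⁻¹`, `ν₂(g,χ) ∈ {0,1}`. -/
theorem stmt_15 (n ℓ : ℕ) (hl : ℓ < n) (g : Equiv.Perm (Fin n)) :
    ∀ (V : FDRep ℂ ↥(stabCoset (fixSubgroup n ℓ ⊓ alternatingGroup (Fin n)) g)), Simple V →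
      nuInd (fixSubgroup n ℓ ⊓ alternatingGroup (Fin n)) g 2 V.character = 0 ∨
      nuInd (fixSubgroup n ℓ ⊓ alternatingGroup (Fin n)) g 2 V.character = 1 := by
  rw [fixSubgroup_eq_fixingSubgroup]
  exact fun V _ ↦ stmt_15_general _ g V
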